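/- The union K₁ ∪ K₂ of two disjoint compact convex sets K₁ and K₂ in ℂⁿ is polynomially convex. -/

import Mathlib

open Set Filter Topology

noncomputable section

/-- Evaluation of a multivariate polynomial as a function on `ℂⁿ = Fin n → ℂ`. -/
def mvEval {n : ℕ} (p : MvPolynomial (Fin n) ℂ) : (Fin n → ℂ) → ℂ :=
  fun z => MvPolynomial.eval z p

/-- The polynomially convex hull of a set in `ℂⁿ`. -/
def polyHull {n : ℕ} (K : Set (Fin n → ℂ)) : Set (Fin n → ℂ) :=
  {z | ∀ p : MvPolynomial (Fin n) ℂ, ‖mvEval p z‖ ≤ sSup ((fun w => ‖mvEval p w‖) '' K)}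

/-- A set in `ℂⁿ` is polynomially convex if it equals its polynomially convex hull. -/
def IsPolyConvex {n : ℕ} (K : Set (Fin n → ℂ)) : Prop := polyHull K = K

/-- The polynomially convex hull of a subset of `ℂ`. -/
def polyHull1 (F : Set ℂ) : Set ℂ :=
  {z | ∀ p : Polynomial ℂ, ‖p.eval z‖ ≤ sSup ((fun w => ‖p.eval w‖) '' F)}

/-- A subset of `ℂ` is polynomially convex if it equals its polynomially convex hull. -/
def IsPolyConvex1 (F : Set ℂ) : Prop := polyHull1 F = F

/-- Partial derivative in the `i`-th coordinate direction. -/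
def pd {n : ℕ} (i : Fin n) (f : (Fin n → ℂ) → ℂ) : (Fin n → ℂ) → ℂ :=
  fun z => fderiv ℂ f z (Pi.single i 1)

/-- Iterated partial derivative `D^ℓ = ∂^{ℓ₁+⋯+ℓₙ}/∂z₁^{ℓ₁}⋯∂zₙ^{ℓₙ}`. -/
def Dml {n : ℕ} (ℓ : Fin n → ℕ) (f : (Fin n → ℂ) → ℂ) : (Fin n → ℂ) → ℂ :=
  (List.finRange n).foldr (fun i g => (pd i)^[ℓ i] g) f

/-- Partial sums `S_λ` of a Taylor-type series around `ζ`, with coefficients computed from a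
given family `g` of (extended) partial derivatives: the coefficient of the monomial
`(z-ζ)^{N_j}` is `g (N_j) ζ / (N_{j,1}! ⋯ N_{j,n}!)`. -/
def pSumExt {n : ℕ} (Nj : ℕ → Fin n → ℕ) (g : (Fin n → ℕ) → (Fin n → ℂ) → ℂ)
    (ζ : Fin n → ℂ) (lam : ℕ) : (Fin n → ℂ) → ℂ :=
  fun z => ∑ j ∈ Finset.range (lam + 1),
    (((∏ i, Nat.factorial (Nj j i) : ℕ) : ℂ))⁻¹ * g (Nj j) ζ * ∏ i, (z i - ζ i) ^ (Nj j i)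

/-- Partial sums `S_λ(f,ζ)` of the Taylor development of `f` around `ζ`. -/
def pSum {n : ℕ} (Nj : ℕ → Fin n → ℕ) (f : (Fin n → ℂ) → ℂ)
    (ζ : Fin n → ℂ) (lam : ℕ) : (Fin n → ℂ) → ℂ :=
  pSumExt Nj (fun ℓ => Dml ℓ f) ζ lam

/-- The space `O(Ω)` of holomorphic functions on `Ω`. -/
def Ospace (n : ℕ) (Ω : Set (Fin n → ℂ)) : Type :=
  {f : (Fin n → ℂ) → ℂ // DifferentiableOn ℂ f Ω}

/-- Topology of uniform convergence on compact subsets of `Ω` on `O(Ω)` (the compact-open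
topology induced via restriction to `Ω`). -/
instance (n : ℕ) (Ω : Set (Fin n → ℂ)) : TopologicalSpace (Ospace n Ω) :=
  TopologicalSpace.induced
    (fun f : Ospace n Ω =>
      (⟨Ω.restrict f.1, continuousOn_iff_continuous_restrict.mp f.2.continuousOn⟩ : C(Ω, ℂ)))
    inferInstance

/-- Membership in `A^∞(Ω)`: `f` is holomorphic on `Ω` and each partial derivative `D^ℓ f`
extends continuously to the closure of `Ω`. -/
def AinfMem (n : ℕ) (Ω : Set (Fin n → ℂ)) (f : (Fin n → ℂ) → ℂ) : Prop :=
  DifferentiableOn ℂ f Ω ∧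
    ∀ ℓ : Fin n → ℕ, ∃ g : (Fin n → ℂ) → ℂ,
      ContinuousOn g (closure Ω) ∧ Set.EqOn g (Dml ℓ f) Ω

/-- The space `A^∞(Ω)`. -/
def AinfSpace (n : ℕ) (Ω : Set (Fin n → ℂ)) : Type :=
  {f : (Fin n → ℂ) → ℂ // AinfMem n Ω f}

/-- The chosen continuous extension of `D^ℓ f` to the closure of `Ω`, for `f ∈ A^∞(Ω)`.
(Its restriction to the closure of `Ω` is uniquely determined.) -/
def AinfExt {n : ℕ} {Ω : Set (Fin n → ℂ)} (f : AinfSpace n Ω) (ℓ : Fin n → ℕ) :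
    (Fin n → ℂ) → ℂ :=
  Classical.choose (f.2.2 ℓ)

lemma AinfExt_continuousOn {n : ℕ} {Ω : Set (Fin n → ℂ)} (f : AinfSpace n Ω) (ℓ : Fin n → ℕ) :
    ContinuousOn (AinfExt f ℓ) (closure Ω) :=
  (Classical.choose_spec (f.2.2 ℓ)).1

lemma AinfExt_eqOn {n : ℕ} {Ω : Set (Fin n → ℂ)} (f : AinfSpace n Ω) (ℓ : Fin n → ℕ) :
    Set.EqOn (AinfExt f ℓ) (Dml ℓ f.1) Ω :=
  (Classical.choose_spec (f.2.2 ℓ)).2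

/-- Topology on `A^∞(Ω)`: uniform convergence of every partial derivative on every compact
subset of the closure of `Ω`. -/
instance (n : ℕ) (Ω : Set (Fin n → ℂ)) : TopologicalSpace (AinfSpace n Ω) :=
  TopologicalSpace.induced
    (fun f : AinfSpace n Ω => fun ℓ : Fin n → ℕ =>
      (⟨(closure Ω).restrict (AinfExt f ℓ),
        continuousOn_iff_continuous_restrict.mp (AinfExt_continuousOn f ℓ)⟩ :
          C(closure Ω, ℂ)))
    inferInstance

/-- A smooth compact curve in `ℂⁿ`: the image of an injective `C^∞` map with
nowhere-vanishing derivative, defined on a compact interval (an arc) or on the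
circle (a closed curve, modelled by a 1-periodic map). -/
def IsSmoothCompactCurve {n : ℕ} (K : Set (Fin n → ℂ)) : Prop :=
  ∃ γ : ℝ → (Fin n → ℂ), ContDiff ℝ (⊤ : ℕ∞) γ ∧ (∀ t, deriv γ t ≠ 0) ∧ K = γ '' Set.Icc 0 1 ∧
    (Set.InjOn γ (Set.Icc 0 1) ∨ (Function.Periodic γ 1 ∧ Set.InjOn γ (Set.Ico 0 1)))

/-- A disjoint union of finitely many smooth compact curves. -/
def IsFiniteUnionOfSmoothCurves {n : ℕ} (K : Set (Fin n → ℂ)) : Prop :=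
  ∃ (m : ℕ) (C : Fin m → Set (Fin n → ℂ)),
    (∀ i, IsSmoothCompactCurve (C i)) ∧ Pairwise (Function.onFun Disjoint C) ∧ K = ⋃ i, C i


/-! Disjoint compact convex sets lie on opposite sides of a real hyperplane `Re f = 0` with `f`
complex affine. For `k` large, `(f + 1) ^ k / ((f - 1) ^ k + (f + 1) ^ k)` is close to `0` on the
side `Re f < 0` and to `1` on the side `0 < Re f`, and its poles all lie on `Re f = 0`. Since the
imaginary axis is connected and unbounded, these poles can be pushed to infinity, which yields
polynomials `P` close to `0` on one set and to `1` on the other. If `q₁` and `q₂` take the value `1`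
at `z` and are smaller than `1` in modulus on `K₁` and `K₂` respectively, then
`q₁ * (1 - P) + q₂ * P` does the same for `K₁ ∪ K₂`. -/

section Runge

open Polynomial

theorem disjoint_spectrum_subalgebra_of_isPreconnected {A : Type*} [NormedRing A]
    [NormedAlgebra ℂ A] [CompleteSpace A] (S : Subalgebra ℂ A) [IsClosed (S : Set A)] (x : S)
    {L : Set ℂ} (hL : IsPreconnected L) (hL_unbdd : ¬ Bornology.IsBounded L)
    (hLx : Disjoint L (spectrum ℂ (x : A))) : Disjoint L (spectrum ℂ x) := by
  refine Set.disjoint_left.mpr fun z hzL hzx => hL_unbdd ?_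
  exact (Subalgebra.spectrum_isBounded_connectedComponentIn S x hzx).subset
    (hL.subset_connectedComponentIn hzL hLx.subset_compl_right)

theorem exists_mem_elemental_mul_aeval_eq_one {A : Type*} [NormedRing A] [NormedAlgebra ℂ A]
    [CompleteSpace A] (x : A) {L : Set ℂ} (hL : IsPreconnected L)
    (hL_unbdd : ¬ Bornology.IsBounded L) (hLx : Disjoint L (spectrum ℂ x)) {q : ℂ[X]}
    (hq : ∀ z, q.IsRoot z → z ∈ L) : ∃ y ∈ Algebra.elemental ℂ x, y * aeval x q = 1 := by
  nontriviality A
  let x' : Algebra.elemental ℂ x := ⟨x, Algebra.elemental.self_mem ℂ x⟩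
  have hLx' : Disjoint L (spectrum ℂ x') :=
    disjoint_spectrum_subalgebra_of_isPreconnected _ x' hL hL_unbdd hLx
  have h_zero : (0 : ℂ) ∉ spectrum ℂ (aeval x' q) := by
    rw [spectrum.map_polynomial_aeval]
    rintro ⟨z, hz, hqz⟩
    exact hLx'.notMem_of_mem_left (hq z hqz) hz
  obtain ⟨y, hy⟩ := (spectrum.isUnit_of_zero_notMem ℂ h_zero).exists_left_inv
  exact ⟨y, y.2, by simpa [x', Subalgebra.aeval_coe] using congrArg Subtype.val hy⟩

theorem exists_norm_aeval_sub_lt_of_mem_elemental {𝕜 A : Type*} [NormedField 𝕜] [NormedRing A]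
    [NormedAlgebra 𝕜 A] {x y : A} (hy : y ∈ Algebra.elemental 𝕜 x) {ε : ℝ} (hε : 0 < ε) :
    ∃ g : 𝕜[X], ‖aeval x g - y‖ < ε := by
  obtain ⟨w, hw, hyw⟩ := Metric.mem_closure_iff.mp hy ε hε
  rw [SetLike.mem_coe, Algebra.adjoin_singleton_eq_range_aeval] at hw
  obtain ⟨g, rfl⟩ := hw
  exact ⟨g, by rwa [← dist_eq_norm, dist_comm]⟩

theorem exists_polynomial_norm_eval_sub_div_lt {s : Set ℂ} (hs : IsCompact s) {L : Set ℂ}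
    (hL : IsPreconnected L) (hL_unbdd : ¬ Bornology.IsBounded L) (hLs : Disjoint L s) (p : ℂ[X])
    {q : ℂ[X]} (hq : ∀ z, q.IsRoot z → z ∈ L) {ε : ℝ} (hε : 0 < ε) :
    ∃ g : ℂ[X], ∀ z ∈ s, ‖g.eval z - p.eval z / q.eval z‖ < ε := by
  have := isCompact_iff_compactSpace.mp hs
  let x : C(s, ℂ) := ⟨Subtype.val, continuous_subtype_val⟩
  have hLx : Disjoint L (spectrum ℂ x) := by
    rwa [ContinuousMap.spectrum_eq_range, ContinuousMap.coe_mk, Subtype.range_val]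
  obtain ⟨y, hy, hyq⟩ := exists_mem_elemental_mul_aeval_eq_one x hL hL_unbdd hLx hq
  have hpy : aeval x p * y ∈ Algebra.elemental ℂ x :=
    mul_mem (Subalgebra.le_topologicalClosure _ (aeval_mem_adjoin_singleton ℂ x)) hy
  obtain ⟨g, hg⟩ := exists_norm_aeval_sub_lt_of_mem_elemental hpy hε
  refine ⟨g, fun z hz => ?_⟩
  have hyz : y ⟨z, hz⟩ * q.eval z = 1 := by
    simpa [x] using DFunLike.congr_fun hyq (⟨z, hz⟩ : s)
  have h := (ContinuousMap.norm_coe_le_norm _ (⟨z, hz⟩ : s)).trans_lt hg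
  simpa [x, div_eq_mul_inv, eq_inv_of_mul_eq_one_left hyz] using h

end Runge

section HalfPlanes

open Polynomial

theorem norm_add_one_sq_sub_norm_sub_one_sq (z : ℂ) :
    ‖z + 1‖ ^ 2 - ‖z - 1‖ ^ 2 = 4 * z.re := by
  rw [Complex.sq_norm, Complex.sq_norm, Complex.normSq_add, Complex.normSq_sub, map_one, map_one,
    mul_one]
  ring

theorem norm_sub_one_lt_norm_add_one {z : ℂ} (hz : 0 < z.re) : ‖z - 1‖ < ‖z + 1‖ :=
  lt_of_pow_lt_pow_left₀ 2 (norm_nonneg _)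
    (by linarith [norm_add_one_sq_sub_norm_sub_one_sq z])

theorem eventually_norm_sub_one_pow_le {s : Set ℂ} (hs : IsCompact s) (hs_re : ∀ z ∈ s, 0 < z.re)
    {δ : ℝ} (hδ : 0 < δ) : ∀ᶠ k in atTop, ∀ z ∈ s, ‖z - 1‖ ^ k ≤ δ * ‖z + 1‖ ^ k := by
  have h_pos : ∀ z ∈ s, 0 < ‖z + 1‖ := fun z hz =>
    (norm_nonneg _).trans_lt (norm_sub_one_lt_norm_add_one (hs_re z hz))
  have h_cont : ContinuousOn (fun z : ℂ => ‖z - 1‖ / ‖z + 1‖) s :=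
    ContinuousOn.div (by fun_prop) (by fun_prop) fun z hz => (h_pos z hz).ne'
  obtain ⟨r, hr, hsr⟩ : ∃ r < 1, ∀ z ∈ s, ‖z - 1‖ / ‖z + 1‖ ≤ r :=
    hs.exists_forall_le' (α := ℝᵒᵈ) h_cont fun z hz =>
      (div_lt_one (h_pos z hz)).mpr (norm_sub_one_lt_norm_add_one (hs_re z hz))
  have h_pow := tendsto_pow_atTop_nhds_zero_of_lt_one (le_max_right r 0) (max_lt hr one_pos)
  filter_upwards [h_pow.eventually_le_const hδ] with k hk z hz
  rw [← div_le_iff₀ (pow_pos (h_pos z hz) k), ← div_pow]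
  exact (pow_le_pow_left₀ (by positivity) ((hsr z hz).trans (le_max_left r 0)) k).trans hk

theorem norm_div_add_le {𝕜 : Type*} [NormedDivisionRing 𝕜] {a b : 𝕜} {ε : ℝ} (hε : 0 ≤ ε)
    (h : ‖b‖ ≤ ε / (1 + ε) * ‖a‖) : ‖b / (a + b)‖ ≤ ε := by
  have h_mul : ‖b‖ * (1 + ε) ≤ ε * ‖a‖ := by
    rwa [div_mul_eq_mul_div, le_div_iff₀ (by positivity)] at h
  have h_sub : ε * (‖a‖ - ‖b‖) ≤ ε * ‖a + b‖ := by
    gcongr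
    simpa only [sub_neg_eq_add, norm_neg] using norm_sub_norm_le a (-b)
  rw [norm_div]
  exact div_le_of_le_mul₀ (norm_nonneg _) hε (by linarith)

theorem isPreconnected_setOf_re_eq_zero : IsPreconnected {z : ℂ | z.re = 0} :=
  ((convex_singleton (0 : ℝ)).linear_preimage Complex.reLm).isPreconnected

theorem not_isBounded_setOf_re_eq_zero : ¬ Bornology.IsBounded {z : ℂ | z.re = 0} := by
  intro h
  obtain ⟨C, hC_pos, hC⟩ := h.exists_pos_norm_lt
  have := hC (C * Complex.I) (by simp)
  simp [abs_of_pos hC_pos] at this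

theorem re_eq_zero_of_sub_one_pow_add_add_one_pow_eq_zero {z : ℂ} {k : ℕ} (hk : k ≠ 0)
    (hz : (z - 1) ^ k + (z + 1) ^ k = 0) : z.re = 0 := by
  have h_pow : ‖z - 1‖ ^ k = ‖z + 1‖ ^ k := by
    rw [← norm_pow, ← norm_pow, eq_neg_of_add_eq_zero_left hz, norm_neg]
  have h_norm := (pow_left_inj₀ (norm_nonneg _) (norm_nonneg _) hk).mp h_pow
  have h_re := norm_add_one_sq_sub_norm_sub_one_sq z
  rw [h_norm] at h_re
  linarith

theorem eventually_norm_sub_one_pow_div_le {s : Set ℂ} (hs : IsCompact s)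
    (hs_re : ∀ z ∈ s, 0 < z.re) {ε : ℝ} (hε : 0 < ε) :
    ∀ᶠ k in atTop, ∀ z ∈ s, ‖(z - 1) ^ k / ((z + 1) ^ k + (z - 1) ^ k)‖ ≤ ε := by
  filter_upwards [eventually_norm_sub_one_pow_le hs hs_re (δ := ε / (1 + ε)) (by positivity)]
    with k hk z hz
  exact norm_div_add_le hε.le (by simpa only [norm_pow] using hk z hz)

theorem eventually_norm_add_one_pow_div_le {s : Set ℂ} (hs : IsCompact s)
    (hs_re : ∀ z ∈ s, z.re < 0) {ε : ℝ} (hε : 0 < ε) :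
    ∀ᶠ k in atTop, ∀ z ∈ s, ‖(z + 1) ^ k / ((z - 1) ^ k + (z + 1) ^ k)‖ ≤ ε := by
  filter_upwards [eventually_norm_sub_one_pow_div_le hs.neg (by simpa using hs_re) hε]
    with k hk z hz
  have h := hk (-z) (by simpa using hz)
  rwa [← neg_add', neg_add_eq_sub, ← neg_sub z 1, neg_pow (z + 1), neg_pow (z - 1), ← mul_add,
    mul_div_mul_left _ _ (by simp)] at h

theorem exists_polynomial_norm_le_of_re_lt_zero_of_zero_lt_re {s t : Set ℂ} (hs : IsCompact s)
    (ht : IsCompact t) (hs_re : ∀ z ∈ s, z.re < 0) (ht_re : ∀ z ∈ t, 0 < z.re) {ε : ℝ}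
    (hε : 0 < ε) :
    ∃ g : ℂ[X], (∀ z ∈ s, ‖g.eval z‖ ≤ ε) ∧ ∀ z ∈ t, ‖1 - g.eval z‖ ≤ ε := by
  obtain ⟨k, hk, hsk, htk⟩ := ((eventually_ne_atTop 0).and
    ((eventually_norm_add_one_pow_div_le hs hs_re (half_pos hε)).and
      (eventually_norm_sub_one_pow_div_le ht ht_re (half_pos hε)))).exists
  have h_root : ∀ z, ((X - 1) ^ k + (X + 1) ^ k : ℂ[X]).IsRoot z → z ∈ {z : ℂ | z.re = 0} :=
    fun z hz => re_eq_zero_of_sub_one_pow_add_add_one_pow_eq_zero hk (by simpa using hz)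
  have h_disj : Disjoint {z : ℂ | z.re = 0} (s ∪ t) :=
    Set.disjoint_union_right.mpr ⟨Set.disjoint_left.mpr fun z hz hzs => (hs_re z hzs).ne hz,
      Set.disjoint_left.mpr fun z hz hzt => (ht_re z hzt).ne' hz⟩
  obtain ⟨g, hg⟩ := exists_polynomial_norm_eval_sub_div_lt (hs.union ht)
    isPreconnected_setOf_re_eq_zero not_isBounded_setOf_re_eq_zero h_disj ((X + 1) ^ k) h_root
    (half_pos hε)
  simp only [eval_add, eval_sub, eval_pow, eval_X, eval_one] at hg
  refine ⟨g, fun z hz => ?_, fun z hz => ?_⟩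
  · linarith [norm_le_norm_sub_add (g.eval z) ((z + 1) ^ k / ((z - 1) ^ k + (z + 1) ^ k)),
      hg z (.inl hz), hsk z hz]
  · have h_ne : (z - 1) ^ k + (z + 1) ^ k ≠ 0 := fun h =>
      (ht_re z hz).ne' (re_eq_zero_of_sub_one_pow_add_add_one_pow_eq_zero hk h)
    have h_eq : (z - 1) ^ k / ((z + 1) ^ k + (z - 1) ^ k)
        = 1 - (z + 1) ^ k / ((z - 1) ^ k + (z + 1) ^ k) := by
      rw [one_sub_div h_ne, add_sub_cancel_right, add_comm]
    have h_small := htk z hz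
    rw [h_eq, norm_sub_rev] at h_small
    rw [norm_sub_rev]
    linarith [norm_sub_le_norm_sub_add_norm_sub (g.eval z)
      ((z + 1) ^ k / ((z - 1) ^ k + (z + 1) ^ k)) 1, hg z (.inr hz)]

end HalfPlanes

section PolyHull

variable {n : ℕ} {K K₁ K₂ : Set (Fin n → ℂ)} {z : Fin n → ℂ}

theorem continuous_mvEval (p : MvPolynomial (Fin n) ℂ) : Continuous (mvEval p) :=
  MvPolynomial.continuous_eval p

theorem mvEval_aeval (f : MvPolynomial (Fin n) ℂ) (g : Polynomial ℂ) (z : Fin n → ℂ) :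
    mvEval (Polynomial.aeval f g) z = g.eval (mvEval f z) := by
  simpa [mvEval, MvPolynomial.aeval_eq_eval] using
    (Polynomial.aeval_algHom_apply (MvPolynomial.aeval z) f g).symm

theorem exists_mvEval_eq_linearMap_add (l : (Fin n → ℂ) →ₗ[ℂ] ℂ) (c : ℂ) :
    ∃ p : MvPolynomial (Fin n) ℂ, ∀ z, mvEval p z = l z + c := by
  refine ⟨∑ i, MvPolynomial.X i * MvPolynomial.C (l fun j => if i = j then 1 else 0) +
    MvPolynomial.C c, fun z => ?_⟩
  simp [mvEval, l.pi_apply_eq_sum_univ z]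

theorem norm_mvEval_le_of_mem_polyHull (hz : z ∈ polyHull K) {p : MvPolynomial (Fin n) ℂ} {M : ℝ}
    (hM : 0 ≤ M) (hp : ∀ w ∈ K, ‖mvEval p w‖ ≤ M) : ‖mvEval p z‖ ≤ M :=
  (hz p).trans (Real.sSup_le (by simpa using hp) hM)

theorem subset_polyHull (hK : IsCompact K) : K ⊆ polyHull K := fun _ hz p =>
  le_csSup (hK.bddAbove_image (continuous_mvEval p).norm.continuousOn) (mem_image_of_mem _ hz)

theorem exists_mvEval_eq_one_of_notMem_polyHull (hK : IsCompact K) (hz : z ∉ polyHull K) :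
    ∃ q : MvPolynomial (Fin n) ℂ, mvEval q z = 1 ∧
      ∃ r, 0 ≤ r ∧ r < 1 ∧ ∀ w ∈ K, ‖mvEval q w‖ ≤ r := by
  obtain ⟨p, hp⟩ : ∃ p, sSup ((fun w => ‖mvEval p w‖) '' K) < ‖mvEval p z‖ := by
    simpa [polyHull] using hz
  set M := sSup ((fun w => ‖mvEval p w‖) '' K)
  have hM : 0 ≤ M := Real.sSup_nonneg (by rintro _ ⟨w, -, rfl⟩; exact norm_nonneg _)
  have hpz : 0 < ‖mvEval p z‖ := hM.trans_lt hp
  refine ⟨MvPolynomial.C (mvEval p z)⁻¹ * p, ?_, M / ‖mvEval p z‖, by positivity,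
    (div_lt_one hpz).mpr hp, fun w hw => ?_⟩
  · simpa [mvEval] using inv_mul_cancel₀ (norm_pos_iff.mp hpz)
  · have hwM : ‖mvEval p w‖ ≤ M :=
      le_csSup (hK.bddAbove_image (continuous_mvEval p).norm.continuousOn) (mem_image_of_mem _ hw)
    simpa [mvEval, div_eq_inv_mul] using div_le_div_of_nonneg_right hwM hpz.le

/-- `K₁` and `K₂` are polynomially separated if the indicator function of `K₂` is a uniform limit of
polynomials on `K₁ ∪ K₂`. -/
def PolySeparated (K₁ K₂ : Set (Fin n → ℂ)) : Prop :=
  ∀ ε > 0, ∃ p : MvPolynomial (Fin n) ℂ,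
    (∀ w ∈ K₁, ‖mvEval p w‖ ≤ ε) ∧ ∀ w ∈ K₂, ‖1 - mvEval p w‖ ≤ ε

theorem polySeparated_of_re_mvEval (hK₁ : IsCompact K₁) (hK₂ : IsCompact K₂)
    {f : MvPolynomial (Fin n) ℂ} (hf₁ : ∀ w ∈ K₁, (mvEval f w).re < 0)
    (hf₂ : ∀ w ∈ K₂, 0 < (mvEval f w).re) : PolySeparated K₁ K₂ := by
  intro ε hε
  obtain ⟨g, hg₁, hg₂⟩ := exists_polynomial_norm_le_of_re_lt_zero_of_zero_lt_re
    (hK₁.image (continuous_mvEval f)) (hK₂.image (continuous_mvEval f))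
    (forall_mem_image.mpr hf₁) (forall_mem_image.mpr hf₂) hε
  refine ⟨Polynomial.aeval f g, fun w hw => ?_, fun w hw => ?_⟩
  · simpa only [mvEval_aeval] using hg₁ _ (mem_image_of_mem _ hw)
  · simpa only [mvEval_aeval] using hg₂ _ (mem_image_of_mem _ hw)

theorem polySeparated_of_convex (hK₁ : IsCompact K₁) (hK₁cv : Convex ℝ K₁) (hK₂ : IsCompact K₂)
    (hK₂cv : Convex ℝ K₂) (hdisj : Disjoint K₁ K₂) : PolySeparated K₁ K₂ := by
  obtain ⟨l, u, v, hu, huv, hv⟩ := RCLike.geometric_hahn_banach_compact_closed (𝕜 := ℂ)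
    hK₁cv hK₁ hK₂cv hK₂.isClosed hdisj
  simp only [RCLike.re_to_complex] at hu hv
  obtain ⟨f, hf⟩ := exists_mvEval_eq_linearMap_add l.toLinearMap (-v : ℂ)
  have hf_re : ∀ w, (mvEval f w).re = (l w).re - v := fun w => by
    simp [hf, sub_eq_add_neg]
  refine polySeparated_of_re_mvEval hK₁ hK₂ (f := f) (fun w hw => ?_) (fun w hw => ?_)
  · linarith [hf_re w, hu w hw]
  · linarith [hf_re w, hv w hw]

theorem PolySeparated.notMem_polyHull (h : PolySeparated K {z}) : z ∉ polyHull K := by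
  intro hz
  obtain ⟨p, hpK, hpz⟩ := h (1 / 3) (by norm_num)
  have h_le := norm_mvEval_le_of_mem_polyHull hz (by norm_num) hpK
  have h_one := norm_le_norm_sub_add 1 (mvEval p z)
  rw [norm_one] at h_one
  linarith [hpz z rfl]

theorem isPolyConvex_of_convex (hK : IsCompact K) (hKcv : Convex ℝ K) : IsPolyConvex K := by
  refine Subset.antisymm (fun z hz => ?_) (subset_polyHull hK)
  by_contra hzK
  exact (polySeparated_of_convex hK hKcv isCompact_singleton (convex_singleton z)
    (disjoint_singleton_right.mpr hzK)).notMem_polyHull hz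

theorem norm_mul_one_sub_add_mul_le {R : Type*} [NormedRing R] {a b t : R} {r M ε : ℝ}
    (ha : ‖a‖ ≤ r) (hb : ‖b‖ ≤ M) (ht : ‖t‖ ≤ ε) :
    ‖a * (1 - t) + b * t‖ ≤ r + (r + M) * ε := by
  have h_sub : ‖b - a‖ ≤ r + M := by linarith [norm_sub_le b a]
  calc ‖a * (1 - t) + b * t‖ = ‖a + (b - a) * t‖ := by noncomm_ring
    _ ≤ ‖a‖ + ‖b - a‖ * ‖t‖ := (norm_add_le _ _).trans (by gcongr; exact norm_mul_le _ _)
    _ ≤ r + (r + M) * ε := by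
      gcongr
      exact (norm_nonneg _).trans h_sub

theorem polyHull_union_subset (hK₁ : IsCompact K₁) (hK₂ : IsCompact K₂)
    (h : PolySeparated K₁ K₂) : polyHull (K₁ ∪ K₂) ⊆ polyHull K₁ ∪ polyHull K₂ := by
  intro z hz
  by_contra! hzK
  rw [mem_union, not_or] at hzK
  obtain ⟨q₁, hq₁z, r₁, hr₁, hr₁_lt, hq₁⟩ := exists_mvEval_eq_one_of_notMem_polyHull hK₁ hzK.1
  obtain ⟨q₂, hq₂z, r₂, -, hr₂_lt, hq₂⟩ := exists_mvEval_eq_one_of_notMem_polyHull hK₂ hzK.2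
  have h_cont := (continuous_mvEval q₁).prodMk (continuous_mvEval q₂)
  obtain ⟨M, hM, hq⟩ := ((hK₁.union hK₂).image h_cont).isBounded.exists_pos_norm_le
  simp only [forall_mem_image, norm_prod_le_iff] at hq
  set r := max r₁ r₂
  obtain ⟨ε, hε, hε_lt⟩ := exists_pos_mul_lt (sub_pos.mpr (max_lt hr₁_lt hr₂_lt)) (r + M)
  obtain ⟨p, hp₁, hp₂⟩ := h ε hε
  have h_eval : ∀ w, mvEval (q₁ * (1 - p) + q₂ * p) w
      = mvEval q₁ w * (1 - mvEval p w) + mvEval q₂ w * mvEval p w := fun w => by simp [mvEval]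
  have h_le : ∀ w ∈ K₁ ∪ K₂, ‖mvEval (q₁ * (1 - p) + q₂ * p) w‖ ≤ r + (r + M) * ε := by
    rintro w (hw | hw)
    · rw [h_eval]
      exact norm_mul_one_sub_add_mul_le ((hq₁ w hw).trans (le_max_left r₁ r₂)) (hq (.inl hw)).2
        (hp₁ w hw)
    · have := norm_mul_one_sub_add_mul_le ((hq₂ w hw).trans (le_max_right r₁ r₂)) (hq (.inr hw)).1
        (hp₂ w hw)
      rwa [sub_sub_cancel, add_comm, ← h_eval] at this
  have h_one : mvEval (q₁ * (1 - p) + q₂ * p) z = 1 := by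
    rw [h_eval, hq₁z, hq₂z, one_mul, one_mul, sub_add_cancel]
  have h_bound := norm_mvEval_le_of_mem_polyHull hz (by positivity) h_le
  rw [h_one, norm_one] at h_bound
  linarith

theorem IsPolyConvex.union (h₁ : IsPolyConvex K₁) (h₂ : IsPolyConvex K₂) (hK₁ : IsCompact K₁)
    (hK₂ : IsCompact K₂) (h : PolySeparated K₁ K₂) : IsPolyConvex (K₁ ∪ K₂) := by
  refine Subset.antisymm ?_ (subset_polyHull (hK₁.union hK₂))
  calc polyHull (K₁ ∪ K₂) ⊆ polyHull K₁ ∪ polyHull K₂ := polyHull_union_subset hK₁ hK₂ h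
    _ = K₁ ∪ K₂ := congrArg₂ (· ∪ ·) h₁ h₂

end PolyHull

/-- the union of two disjoint compact convex sets in `ℂⁿ` is polynomially
convex. -/
theorem isPolyConvex_union_of_convex (n : ℕ) (K₁ K₂ : Set (Fin n → ℂ))
    (hK₁cpt : IsCompact K₁) (hK₁cv : Convex ℝ K₁)
    (hK₂cpt : IsCompact K₂) (hK₂cv : Convex ℝ K₂)
    (hdisj : Disjoint K₁ K₂) :
    IsPolyConvex (K₁ ∪ K₂) :=
  (isPolyConvex_of_convex hK₁cpt hK₁cv).union (isPolyConvex_of_convex hK₂cpt hK₂cv)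
    hK₁cpt hK₂cpt (polySeparated_of_convex hK₁cpt hK₁cv hK₂cpt hK₂cv hdisj)

end
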